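/- Let ε ∈ {1, -1}. Suppose x : ℕ → ℝ satisfies ∑_{k=0}^{n} \binom{n}{k}(-1)^k x_k = ε x_n for every n, and y : ℕ → ℝ is finitely supported and satisfies ∑_{k=n}^∞ \binom{k}{n}(-1)^k y_k = -ε y_n for every n (these sums are finite by finite support). Then ∑_{k} (-1)^k x_k y_k = 0 (a finite sum). In particular, an invariant sequence of the first kind and a finitely supported inverse invariant sequence of the second kind are D-orthogonal, and likewise an inverse invariant sequence of the first kind and a finitely supported invariant sequence of the second kind. -/

import Mathlib

/-!
Let `D` be the diagonal matrix with entries `(-1) ^ k` and `P` the lower triangular Pascal matrix.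
The two kinds of (inverse) invariant sequences are eigenvectors of `P D` and `Pᵀ D`, and
`(P D x)ᵀ D y = xᵀ D (Pᵀ D y)`: these operators are adjoint for the pairing `xᵀ D y`.
As usual, eigenvectors of adjoint operators for distinct eigenvalues are orthogonal.
-/

open Finset Function

section BinomialTransform

variable {R : Type*} [CommRing R]

/-- The signed binomial transform `P D x`, where `P` is the lower triangular Pascal matrix; its
eigenvectors for `1` and `-1` are the invariant and inverse invariant sequences of the first
kind. -/
def binomialTransform (x : ℕ → R) (n : ℕ) : R :=
  ∑ k ∈ range (n + 1), (n.choose k : R) * (-1) ^ k * x k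

/-- The transposed signed binomial transform `Pᵀ D y`; its finitely supported eigenvectors for `1`
and `-1` are the invariant and inverse invariant sequences of the second kind. It is a `finsum`,
so it is meaningful only when each of its sums has finitely many nonzero terms, for instance when
`y` is finitely supported. -/
noncomputable def transposeBinomialTransform (y : ℕ → R) (n : ℕ) : R :=
  ∑ᶠ k, (k.choose n : R) * (-1) ^ k * y k

/-- The bilinear pairing `xᵀ D y`, for which `P D` and `Pᵀ D` are adjoint. It is a `finsum`, so it
is meaningful only when `x * y` is finitely supported. -/
noncomputable def alternatingPairing (x y : ℕ → R) : R :=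
  ∑ᶠ k, (-1) ^ k * x k * y k

lemma support_choose_mul_subset (f : ℕ → R) (n : ℕ) :
    support (fun k ↦ (n.choose k : R) * f k) ⊆ range (n + 1) := by
  intro k hk
  by_contra hkn
  have hlt : n < k := by simpa using hkn
  exact hk (by simp [Nat.choose_eq_zero_of_lt hlt])

lemma hasFiniteSupport_choose_mul (f : ℕ → R) (n : ℕ) :
    HasFiniteSupport fun k ↦ (n.choose k : R) * f k :=
  (range (n + 1)).finite_toSet.subset (support_choose_mul_subset f n)

lemma binomialTransform_eq_finsum (x : ℕ → R) (n : ℕ) :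
    binomialTransform x n = ∑ᶠ k, (n.choose k : R) * ((-1) ^ k * x k) := by
  rw [finsum_eq_sum_of_support_subset _ (support_choose_mul_subset _ n)]
  simp only [binomialTransform, mul_assoc]

lemma alternatingPairing_eq_sum (x : ℕ → R) {y : ℕ → R} {s : Finset ℕ} (hs : support y ⊆ s) :
    alternatingPairing x y = ∑ k ∈ s, (-1) ^ k * x k * y k :=
  finsum_eq_sum_of_support_subset _ ((support_mul_subset_right _ _).trans hs)

lemma transposeBinomialTransform_eq_sum {y : ℕ → R} {s : Finset ℕ} (hs : support y ⊆ s) (n : ℕ) :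
    transposeBinomialTransform y n = ∑ k ∈ s, (k.choose n : R) * (-1) ^ k * y k :=
  finsum_eq_sum_of_support_subset _ ((support_mul_subset_right _ _).trans hs)

theorem alternatingPairing_binomialTransform_left (x : ℕ → R) {y : ℕ → R}
    (hy : (support y).Finite) :
    alternatingPairing (binomialTransform x) y =
      alternatingPairing x (transposeBinomialTransform y) := by
  set s := hy.toFinset
  have hs : support y ⊆ s := hy.coe_toFinset.superset
  let entry (n k : ℕ) : R := (n.choose k : R) * ((-1) ^ k * x k * ((-1) ^ n * y n))
  calc alternatingPairing (binomialTransform x) y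
      = ∑ n ∈ s, (∑ᶠ k, (n.choose k : R) * ((-1) ^ k * x k)) * ((-1) ^ n * y n) := by
        simp only [alternatingPairing_eq_sum _ hs, binomialTransform_eq_finsum]
        exact sum_congr rfl fun n _ ↦ by ring
    _ = ∑ n ∈ s, ∑ᶠ k, entry n k := by
        simp only [finsum_mul' _ _ (hasFiniteSupport_choose_mul _ _), entry, mul_assoc]
    _ = ∑ᶠ k, ∑ n ∈ s, entry n k :=
        sum_finsum_comm s entry fun n _ ↦ hasFiniteSupport_choose_mul _ n
    _ = alternatingPairing x (transposeBinomialTransform y) := by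
        simp only [alternatingPairing, transposeBinomialTransform_eq_sum hs, mul_sum, entry]
        exact finsum_congr fun k ↦ sum_congr rfl fun n _ ↦ by ring

lemma alternatingPairing_smul_left (c : R) (x : ℕ → R) {y : ℕ → R} (hy : (support y).Finite) :
    alternatingPairing (c • x) y = c * alternatingPairing x y := by
  have hs : support y ⊆ hy.toFinset := hy.coe_toFinset.superset
  simp only [alternatingPairing_eq_sum _ hs, mul_sum, Pi.smul_apply, smul_eq_mul]
  exact sum_congr rfl fun k _ ↦ by ring

lemma alternatingPairing_smul_right (c : R) (x : ℕ → R) {y : ℕ → R} (hy : (support y).Finite) :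
    alternatingPairing x (c • y) = c * alternatingPairing x y := by
  have hs : support y ⊆ hy.toFinset := hy.coe_toFinset.superset
  have hcs : support (c • y) ⊆ hy.toFinset := (support_const_smul_subset c y).trans hs
  simp only [alternatingPairing_eq_sum _ hs, alternatingPairing_eq_sum _ hcs, mul_sum,
    Pi.smul_apply, smul_eq_mul]
  exact sum_congr rfl fun k _ ↦ by ring

theorem stmt17_general {a b : R} (hab : a - b ∈ nonZeroDivisors R) {x y : ℕ → R}
    (hx : binomialTransform x = a • x) (hy : (support y).Finite)
    (hyinv : transposeBinomialTransform y = b • y) :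
    alternatingPairing x y = 0 := by
  have adjoint : a * alternatingPairing x y = b * alternatingPairing x y := by
    rw [← alternatingPairing_smul_left a x hy, ← hx,
      alternatingPairing_binomialTransform_left x hy, hyinv, alternatingPairing_smul_right b x hy]
  rw [← mul_right_mem_nonZeroDivisors_eq_zero_iff hab, mul_comm, sub_mul, adjoint, sub_self]

end BinomialTransform

/-- an (inverse) invariant sequence of the first kind and a finitely
supported (inverse, resp.) invariant sequence of the second kind with opposite signs
are `D`-orthogonal: `∑ k, (-1)^k x k * y k = 0` (a finite sum by finite support of `y`). -/
theorem stmt17 (ε : ℝ) (hε : ε = 1 ∨ ε = -1) (x y : ℕ → ℝ)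
    (hx : ∀ n, ∑ k ∈ Finset.range (n + 1), (Nat.choose n k : ℝ) * (-1) ^ k * x k = ε * x n)
    (hy : (Function.support y).Finite)
    (hyinv : ∀ n, ∑ᶠ k, (Nat.choose k n : ℝ) * (-1) ^ k * y k = -ε * y n) :
    ∑ᶠ k, (-1 : ℝ) ^ k * x k * y k = 0 := by
  have hne : ε - -ε ≠ 0 := by rcases hε with rfl | rfl <;> norm_num
  exact stmt17_general (mem_nonZeroDivisors_of_ne_zero hne) (funext hx) hy (funext hyinv)
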